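/- arXiv:2105.12550 — 5 statements merged into one kernel-verified Lean document; each statement's English description precedes it below -/
import Mathlib

section
/- For every integer n ≥ 1, the Krull dimension of the ring ℂ[x_{ij}, y_{ij} (1 ≤ i,j ≤ n), s, t] / I equals n² + n, where X = (x_{ij}) and Y = (y_{ij}) are the generic n×n matrices and I is the ideal generated by the n² entries of XY − YX together with the two elements s·det(X) − 1 and t·det(Y) − 1. (This ring is the coordinate ring of the commuting variety C(GL_n) = {(a,b) ∈ GL_n × GL_n : ab = ba}, so this says dim C(GL_n) = n² + n, i.e. the commuting probability p(GL_n) = dim C(GL_n)/(2·dim GL_n) equals (n+1)/(2n).) -/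
open MvPolynomial

/-- The generic matrix `X` of size `n × n`, with entries the variables `x_{ij}`. -/
noncomputable def genX (n : ℕ) :
    Matrix (Fin n) (Fin n)
      (MvPolynomial ((Fin n × Fin n) ⊕ (Fin n × Fin n) ⊕ Fin 2) ℂ) :=
  fun i j => X (Sum.inl (i, j))

/-- The generic matrix `Y` of size `n × n`, with entries the variables `y_{ij}`. -/
noncomputable def genY (n : ℕ) :
    Matrix (Fin n) (Fin n)
      (MvPolynomial ((Fin n × Fin n) ⊕ (Fin n × Fin n) ⊕ Fin 2) ℂ) :=
  fun i j => X (Sum.inr (Sum.inl (i, j)))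

/-- The auxiliary variable `s`. -/
noncomputable def genS (n : ℕ) :
    MvPolynomial ((Fin n × Fin n) ⊕ (Fin n × Fin n) ⊕ Fin 2) ℂ :=
  X (Sum.inr (Sum.inr 0))

/-- The auxiliary variable `t`. -/
noncomputable def genT (n : ℕ) :
    MvPolynomial ((Fin n × Fin n) ⊕ (Fin n × Fin n) ⊕ Fin 2) ℂ :=
  X (Sum.inr (Sum.inr 1))


theorem dim_integral_le {R S : Type} [CommRing R] [CommRing S] [Algebra R S] [Algebra.IsIntegral R S] :
    ringKrullDim S ≤ ringKrullDim R := by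
  refine Order.krullDim_le_of_strictMono (PrimeSpectrum.comap (algebraMap R S)) ?_
  intro I J h
  exact Ideal.IsIntegral.comap_lt_comap (R := R) (I := I.asIdeal) (J := J.asIdeal) h

theorem dim_integral_ge {R S : Type} [CommRing R] [CommRing S] [Algebra R S] [Algebra.IsIntegral R S]
    [FaithfulSMul R S] :
    ringKrullDim R ≤ ringKrullDim S := by
  refine iSup_le fun l => ?_
  obtain ⟨Q, hQ, hQ'⟩ := (inferInstance : Nonempty (Ideal.primesOver (RelSeries.head l).asIdeal S))
  obtain ⟨L, hL, -⟩ := Ideal.exists_ltSeries_of_hasGoingUp l Q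
  rw [← hL]
  exact le_iSup (fun p : LTSeries (PrimeSpectrum S) => ((p.length : ℕ∞) : WithBot ℕ∞)) L

theorem dim_upper {R : Type} [CommRing R] [Algebra ℂ R] [Algebra.FiniteType ℂ R] (N : ℕ)
    (H : ∀ (K : Type) [Field K] [Algebra ℂ K] (φ : R →ₐ[ℂ] K) (s : ℕ) (x : Fin s → R),
      AlgebraicIndependent ℂ (fun i => φ (x i)) → s ≤ N) : ringKrullDim R ≤ (N : WithBot ℕ∞) := by
  cases subsingleton_or_nontrivial R
  · rw [ringKrullDim_eq_bot_of_subsingleton]; exact bot_le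
  obtain ⟨s, g, hg, hi⟩ := exists_integral_inj_algHom_of_fg ℂ R
  algebraize [g.toRingHom]
  have : Algebra.IsIntegral (MvPolynomial (Fin s) ℂ) R := ⟨hi⟩
  have : FaithfulSMul (MvPolynomial (Fin s) ℂ) R :=
    (faithfulSMul_iff_algebraMap_injective _ _).mpr hg
  obtain ⟨P, hP, hP'⟩ :=
    (inferInstance : Nonempty (Ideal.primesOver (⊥ : Ideal (MvPolynomial (Fin s) ℂ)) R))
  have h1 : s ≤ N := by
    refine H (FractionRing (R ⧸ P)) ((IsScalarTower.toAlgHom ℂ (R ⧸ P) _).comp (Ideal.Quotient.mkₐ ℂ P))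
      s (fun i => g (X i)) ?_
    have : AlgebraicIndependent ℂ (fun i => (Ideal.Quotient.mkₐ ℂ P) (g (X i))) := by
      change Function.Injective _
      have : (aeval fun i => (Ideal.Quotient.mkₐ ℂ P) (g (X i))) = (Ideal.Quotient.mkₐ ℂ P).comp g := by
        ext i; simp
      rw [this, injective_iff_map_eq_zero]
      intro a ha
      have h2 : g a ∈ P := by
        simpa [Ideal.Quotient.eq_zero_iff_mem] using ha
      have h3 : a ∈ P.under (MvPolynomial (Fin s) ℂ) := h2
      rw [← hP'.over] at h3
      simpa using h3
    exact this.map' (f := IsScalarTower.toAlgHom ℂ (R ⧸ P) (FractionRing (R ⧸ P)))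
      (IsFractionRing.injective _ _)
  refine (dim_integral_le (R := MvPolynomial (Fin s) ℂ)).trans ?_
  rw [MvPolynomial.ringKrullDim_of_isNoetherianRing, ringKrullDim_eq_zero_of_field]
  simp
  exact_mod_cast h1

theorem dim_lower {R : Type} [CommRing R] [Algebra ℂ R] [Algebra.FiniteType ℂ R] (N : ℕ)
    (K : Type) [Field K] [Algebra ℂ K] (φ : R →ₐ[ℂ] K) (x : Fin N → K)
    (hx : AlgebraicIndependent ℂ x) [Algebra.IsAlgebraic φ.range K] :
    (N : WithBot ℕ∞) ≤ ringKrullDim R := by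
  refine le_trans ?_ (ringKrullDim_le_of_surjective φ.rangeRestrict.toRingHom φ.rangeRestrict_surjective)
  have : Algebra.FiniteType ℂ φ.range := .of_surjective φ.rangeRestrict φ.rangeRestrict_surjective
  obtain ⟨s, g, hg, hi⟩ := exists_integral_inj_algHom_of_fg ℂ φ.range
  have h1 : N ≤ s := by
    algebraize [g.toRingHom]
    have : Algebra.IsIntegral (MvPolynomial (Fin s) ℂ) φ.range := ⟨hi⟩
    have : FaithfulSMul (MvPolynomial (Fin s) ℂ) φ.range :=
      (faithfulSMul_iff_algebraMap_injective _ _).mpr hg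
    have : FaithfulSMul ℂ φ.range :=
      (faithfulSMul_iff_algebraMap_injective _ _).mpr (algebraMap ℂ φ.range).injective
    have e1 := trdeg_add_eq ℂ (MvPolynomial (Fin s) ℂ) (A := φ.range)
    have e2 := trdeg_add_eq ℂ φ.range (A := K)
    rw [trdeg_eq_zero (R := MvPolynomial (Fin s) ℂ) (A := φ.range), MvPolynomial.trdeg_of_isDomain] at e1
    rw [trdeg_eq_zero (R := φ.range) (A := K), ← e1] at e2
    have := hx.cardinalMk_le_trdeg
    rw [← e2] at this
    simpa using this
  algebraize [g.toRingHom]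
  have : Algebra.IsIntegral (MvPolynomial (Fin s) ℂ) φ.range := ⟨hi⟩
  have : FaithfulSMul (MvPolynomial (Fin s) ℂ) φ.range :=
    (faithfulSMul_iff_algebraMap_injective _ _).mpr hg
  refine le_trans ?_ (dim_integral_ge (R := MvPolynomial (Fin s) ℂ))
  rw [MvPolynomial.ringKrullDim_of_isNoetherianRing, ringKrullDim_eq_zero_of_field]
  simp
  exact_mod_cast h1

open IntermediateField.algebraAdjoinAdjoin in
theorem card_le_of_adjoin {K : Type} [Field K] [Algebra ℂ K] {ι : Type} [Fintype ι] (f : ι → K)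
    (s : ℕ) (x : Fin s → K) (hx : AlgebraicIndependent ℂ x)
    (hm : ∀ i, x i ∈ IntermediateField.adjoin ℂ (Set.range f)) : s ≤ Fintype.card ι := by
  let L := IntermediateField.adjoin ℂ (Set.range f)
  let D := Algebra.adjoin ℂ (Set.range f)
  have h1 : Algebra.trdeg ℂ D ≤ Fintype.card ι := by
    have e : D = (aeval f : MvPolynomial ι ℂ →ₐ[ℂ] K).range := Algebra.adjoin_range_eq_range_aeval ℂ f
    rw [e]
    refine (trdeg_le_of_surjective (aeval f : MvPolynomial ι ℂ →ₐ[ℂ] K).rangeRestrict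
      (AlgHom.rangeRestrict_surjective _)).trans ?_
    rw [MvPolynomial.trdeg_of_isDomain]
    simp
  have : IsFractionRing D L := inferInstance
  have : Algebra.IsAlgebraic D L := IsLocalization.isAlgebraic (R := D) L (nonZeroDivisors D)
  have : FaithfulSMul ℂ D :=
      (faithfulSMul_iff_algebraMap_injective _ _).mpr (algebraMap ℂ D).injective
  have e2 := trdeg_add_eq ℂ D (A := L)
  rw [trdeg_eq_zero (R := D) (A := L), add_zero] at e2
  have hy : AlgebraicIndependent ℂ (fun i => (⟨x i, hm i⟩ : L)) := by
    refine AlgebraicIndependent.of_comp L.val ?_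
    exact hx
  have := hy.cardinalMk_le_trdeg
  rw [← e2] at this
  have := this.trans h1
  simpa using this

theorem ker_param {m N E : Type} [Fintype m] [Fintype N] [Field E] (M : Matrix m N E) :
    ∃ (κ T : Type) (_ : Fintype κ) (_ : Fintype T) (e : κ ⊕ T ≃ N) (C : Matrix κ T E),
      ∀ (K : Type) [Field K] [Algebra E K] (v : N → K),
        (M.map (algebraMap E K)).mulVec v = 0 ↔
          ∀ u, v (e (Sum.inl u)) = ∑ t, algebraMap E K (C u t) * v (e (Sum.inr t)) := by
  classical
  obtain ⟨κ, a, ha, hspan, hli⟩ := exists_linearIndependent' E (fun j : N => fun i => M i j)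
  have : Fintype κ := Fintype.ofInjective a ha
  let T := ((Set.range a)ᶜ : Set N)
  let e : κ ⊕ T ≃ N := ((Equiv.ofInjective a ha).sumCongr (Equiv.refl T)).trans
    (Equiv.Set.sumCompl (Set.range a))
  have e1 : ∀ u, e (Sum.inl u) = a u := fun u => by
    simp only [e, Equiv.trans_apply, Equiv.sumCongr_apply, Sum.map_inl]
    exact Equiv.Set.sumCompl_apply_inl _ _
  have e2 : ∀ t : T, e (Sum.inr t) = t := fun u => by
    simp only [e, Equiv.trans_apply, Equiv.sumCongr_apply, Sum.map_inr]
    exact Equiv.Set.sumCompl_apply_inr _ _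
  have hc : ∀ t : T, ∃ c : κ → E, ∀ i, M i t = ∑ u, c u * M i (a u) := by
    intro t
    have : (fun i => M i t) ∈ Submodule.span E (Set.range ((fun j : N => fun i => M i j) ∘ a)) := by
      rw [hspan]; exact Submodule.subset_span ⟨t, rfl⟩
    obtain ⟨c, hc⟩ := (Submodule.mem_span_range_iff_exists_fun E).mp this
    refine ⟨c, fun i => ?_⟩
    have := congrFun hc i
    simpa using this.symm
  choose c hc using hc
  -- left inverse
  obtain ⟨L, hL⟩ : ∃ L : Matrix κ m E, ∀ u u', ∑ i, L u i * M i (a u') = if u = u' then 1 else 0 := by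
    let f : (κ → E) →ₗ[E] (m → E) := Fintype.linearCombination E ((fun j : N => fun i => M i j) ∘ a)
    have hf : LinearMap.ker f = ⊥ := by
      rw [LinearMap.ker_eq_bot]
      exact hli.fintypeLinearCombination_injective
    obtain ⟨g, hg⟩ := f.exists_leftInverse_of_injective hf
    refine ⟨LinearMap.toMatrix' g, fun u u' => ?_⟩
    have h1 : (LinearMap.toMatrix' g).mulVec (f (Pi.single u' 1)) u = (Pi.single u' 1 : κ → E) u := by
      rw [LinearMap.toMatrix'_mulVec, ← LinearMap.comp_apply, hg]; rfl
    have h2 : f (Pi.single u' 1) = fun i => M i (a u') := by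
      ext i
      simp [f, Fintype.linearCombination_apply_single]
    rw [h2] at h1
    simpa [Matrix.mulVec, dotProduct, Pi.single_apply] using h1
  refine ⟨κ, T, inferInstance, inferInstance, e, fun u t => - c t u, ?_⟩
  intro K _ _ v
  have key : ∀ i, (M.map (algebraMap E K)).mulVec v i =
      ∑ u, algebraMap E K (M i (a u)) * (v (a u) + ∑ t : T, algebraMap E K (c t u) * v t) := by
    intro i
    simp only [Matrix.mulVec, dotProduct, Matrix.map_apply]
    rw [← e.sum_comp, Fintype.sum_sum_type]
    simp only [e1, e2, mul_add, Finset.sum_add_distrib, hc, map_sum, map_mul]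
    congr 1
    simp only [Finset.mul_sum, Finset.sum_mul]
    rw [Finset.sum_comm]
    refine Finset.sum_congr rfl fun _ _ => Finset.sum_congr rfl fun _ _ => by ring
  simp only [e1, e2, map_neg, neg_mul, Finset.sum_neg_distrib]
  constructor
  · intro h u
    have h0 : ∑ i, algebraMap E K (L u i) * (M.map (algebraMap E K)).mulVec v i = 0 := by
      rw [h]; simp
    simp only [key, Finset.mul_sum] at h0
    rw [Finset.sum_comm] at h0
    simp only [← mul_assoc, ← map_mul, ← Finset.sum_mul, ← map_sum, hL] at h0
    simp at h0
    linear_combination h0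
  · intro h
    ext i
    rw [key]
    simp [h]

def sylv {n E : Type} [DecidableEq n] [CommRing E] (P Q : Matrix n n E) : Matrix (n × n) (n × n) E :=
  fun p q => (if q.2 = p.2 then P p.1 q.1 else 0) - (if q.1 = p.1 then Q q.2 p.2 else 0)

theorem sylv_mulVec {n E : Type} [Fintype n] [DecidableEq n] [CommRing E] (P Q : Matrix n n E)
    (v : n × n → E) : (sylv P Q).mulVec v = 0 ↔
      P * (Matrix.of fun i j => v (i, j)) = (Matrix.of fun i j => v (i, j)) * Q := by
  rw [← sub_eq_zero (a := P * _), funext_iff, ← Matrix.ext_iff, Prod.forall]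
  refine forall_congr' fun i => forall_congr' fun j => ?_
  simp [Matrix.mulVec, dotProduct, sylv, Matrix.mul_apply, sub_mul, Fintype.sum_prod_type, ite_mul]
  rw [Finset.sum_congr rfl fun x _ => mul_comm (Q x j) (v (i, x))]

theorem sylv_map {n E K : Type} [Fintype n] [DecidableEq n] [CommRing E] [CommRing K] (φ : E →+* K) (P Q : Matrix n n E) :
    (sylv P Q).map φ = sylv (P.map φ) (Q.map φ) := by
  ext p q
  simp [sylv, apply_ite φ]

/-- matrices parametrization -/
theorem sylv_param {n E : Type} [Fintype n] [DecidableEq n] [Field E] (P Q : Matrix n n E) :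
    ∃ (κ T : Type) (_ : Fintype κ) (_ : Fintype T) (e : κ ⊕ T ≃ n × n) (C : Matrix κ T E),
      ∀ (K : Type) [Field K] [Algebra E K] (V : Matrix n n K),
        P.map (algebraMap E K) * V = V * Q.map (algebraMap E K) ↔
          ∀ u, V (e (Sum.inl u)).1 (e (Sum.inl u)).2 =
            ∑ t, algebraMap E K (C u t) * V (e (Sum.inr t)).1 (e (Sum.inr t)).2 := by
  obtain ⟨κ, T, _, _, e, C, h⟩ := ker_param (sylv P Q)
  refine ⟨κ, T, inferInstance, inferInstance, e, C, fun K _ _ V => ?_⟩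
  rw [← h K (fun p => V p.1 p.2), sylv_map, sylv_mulVec]
  rfl

noncomputable def extM {n κ T K : Type} [Fintype T] [Field K] (e : κ ⊕ T ≃ n × n) (C : Matrix κ T K) :
    (T → K) →ₗ[K] Matrix n n K where
  toFun w := Matrix.of fun i j => Sum.elim (fun u => ∑ t, C u t * w t) w (e.symm (i, j))
  map_add' x y := by
    ext i j
    rcases h : e.symm (i, j) with u | t <;> simp [h, mul_add, Finset.sum_add_distrib]
  map_smul' c x := by
    ext i j
    rcases h : e.symm (i, j) with u | t <;> simp [h, Finset.mul_sum, mul_left_comm]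

theorem extM_inl {n κ T K : Type} [Fintype T] [Field K] (e : κ ⊕ T ≃ n × n) (C : Matrix κ T K) (w u) :
    extM e C w (e (Sum.inl u)).1 (e (Sum.inl u)).2 = ∑ t, C u t * w t := by
  simp [extM]

theorem extM_inr {n κ T K : Type} [Fintype T] [Field K] (e : κ ⊕ T ≃ n × n) (C : Matrix κ T K) (w u) :
    extM e C w (e (Sum.inr u)).1 (e (Sum.inr u)).2 = w u := by
  simp [extM]

theorem eq_extM {n κ T K : Type} [Fintype T] [Field K] (e : κ ⊕ T ≃ n × n) (C : Matrix κ T K)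
    (V : Matrix n n K) (h : ∀ u, V (e (Sum.inl u)).1 (e (Sum.inl u)).2 =
            ∑ t, C u t * V (e (Sum.inr t)).1 (e (Sum.inr t)).2) :
    V = extM e C (fun t => V (e (Sum.inr t)).1 (e (Sum.inr t)).2) := by
  ext i j
  obtain ⟨x, hx⟩ := e.surjective (i, j)
  have h1 : i = (e x).1 := by rw [hx]
  have h2 : j = (e x).2 := by rw [hx]
  rw [h1, h2]
  rcases x with u | t
  · rw [extM_inl, h]
  · rw [extM_inr]

/-- polynomial point choice -/
theorem exists_point {n T K : Type} [Fintype n] [DecidableEq n] [Fintype T] [Field K] [Algebra ℂ K]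
    (F : (T → K) →ₗ[K] Matrix n n K) (w0 : T → K) (h0 : (F w0).det ≠ 0) :
    ∃ w : T → ℂ, (F (fun t => algebraMap ℂ K (w t))).det ≠ 0 := by
  classical
  let P : Matrix n n (MvPolynomial T K) :=
    Matrix.of fun i j => ∑ t, C (F (Pi.single t 1) i j) * X t
  have hP : ∀ w, eval w P.det = (F w).det := by
    intro w
    rw [RingHom.map_det]
    congr 1
    ext i j
    have : w = ∑ t, w t • (Pi.single t 1 : T → K) := by
      simpa using (pi_eq_sum_univ' w)
    conv_rhs => rw [this]
    simp [P, Matrix.sum_apply, mul_comm]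
  by_contra! H
  have : P.det = 0 := by
    refine MvPolynomial.funext_set (fun _ : T => Set.range (algebraMap ℂ K)) ?_ ?_
    · intro _
      exact Set.infinite_range_of_injective (algebraMap ℂ K).injective
    · intro x hx
      choose w hw using fun t => hx t trivial
      have : x = fun t => algebraMap ℂ K (w t) := by ext t; simp [hw]
      rw [hP, this, H]; simp
  apply h0
  rw [← hP, this]; simp

theorem card_T_le {n κ₁ T₁ κ₂ T₂ K : Type} [Fintype n] [DecidableEq n] [Fintype T₁] [Fintype T₂] [Field K]
    (e₁ : κ₁ ⊕ T₁ ≃ n × n) (C₁ : Matrix κ₁ T₁ K) (e₂ : κ₂ ⊕ T₂ ≃ n × n) (C₂ : Matrix κ₂ T₂ K)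
    (A J g : Matrix n n K) (hg : IsUnit g) (hgA : A * g = g * J)
    (h₁ : ∀ V : Matrix n n K, A * V = V * J ↔ ∀ u, V (e₁ (Sum.inl u)).1 (e₁ (Sum.inl u)).2 =
            ∑ t, C₁ u t * V (e₁ (Sum.inr t)).1 (e₁ (Sum.inr t)).2)
    (h₂ : ∀ V : Matrix n n K, J * V = V * J ↔ ∀ u, V (e₂ (Sum.inl u)).1 (e₂ (Sum.inl u)).2 =
            ∑ t, C₂ u t * V (e₂ (Sum.inr t)).1 (e₂ (Sum.inr t)).2) :
    Fintype.card T₂ ≤ Fintype.card T₁ := by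
  let R : Matrix n n K →ₗ[K] (T₁ → K) :=
    { toFun := fun V t => V (e₁ (Sum.inr t)).1 (e₁ (Sum.inr t)).2
      map_add' := fun _ _ => rfl
      map_smul' := fun _ _ => rfl }
  let Φ : (T₂ → K) →ₗ[K] (T₁ → K) := R ∘ₗ LinearMap.mulLeft K g ∘ₗ extM e₂ C₂
  have hΦ : Function.Injective Φ := by
    rw [injective_iff_map_eq_zero]
    intro w hw
    have hJ : J * extM e₂ C₂ w = extM e₂ C₂ w * J := by
      rw [h₂]; intro u; simp only [extM_inl, extM_inr]
    have hA : A * (g * extM e₂ C₂ w) = (g * extM e₂ C₂ w) * J := by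
      rw [← mul_assoc, hgA, mul_assoc, hJ, mul_assoc]
    have := eq_extM e₁ C₁ _ ((h₁ _).mp hA)
    have h0 : (fun t => (g * extM e₂ C₂ w) (e₁ (Sum.inr t)).1 (e₁ (Sum.inr t)).2) = 0 := hw
    rw [h0, map_zero] at this
    have h3 : extM e₂ C₂ w = 0 := by
      obtain ⟨g', rfl⟩ := hg
      have := congrArg (fun M => (↑g'⁻¹ : Matrix n n K) * M) this
      simpa using this
    ext t
    rw [← extM_inr e₂ C₂ w t, h3]; rfl
  simpa using LinearMap.finrank_le_finrank_of_injective hΦ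

theorem cyc_basis {K : Type} [Field K] (q : Polynomial K) (hq : q ≠ 0) :
    ∃ (d : ℕ) (b : Module.Basis (Fin d) K (Polynomial K ⧸ Submodule.span (Polynomial K) {q})) (c : Fin d → K),
      ∀ i j, b.repr ((Polynomial.X : Polynomial K) • b j) i = 0 ∨
        b.repr ((Polynomial.X : Polynomial K) • b j) i = 1 ∨
        b.repr ((Polynomial.X : Polynomial K) • b j) i = - c i := by
  let pb := AdjoinRoot.powerBasis hq
  refine ⟨pb.dim, pb.basis, fun i => pb.minpolyGen.coeff i, fun i j => ?_⟩
  have h := congrFun (congrFun pb.leftMulMatrix i) j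
  rw [Algebra.leftMulMatrix_apply, LinearMap.toMatrix_apply] at h
  have h2 : (Algebra.lmul K (AdjoinRoot q) pb.gen) (pb.basis j) = AdjoinRoot.mk q Polynomial.X * (pb.basis j) := by
    simp [pb]
  rw [h2] at h
  have h3 : pb.basis.repr (AdjoinRoot.mk q Polynomial.X * (pb.basis j)) i = 0 ∨
     pb.basis.repr (AdjoinRoot.mk q Polynomial.X * (pb.basis j)) i = 1 ∨
     pb.basis.repr (AdjoinRoot.mk q Polynomial.X * (pb.basis j)) i = - pb.minpolyGen.coeff i := by
    rw [h]
    simp only [Matrix.of_apply]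
    split_ifs <;> simp
  exact h3

theorem exists_rcf_basis {K : Type} [Field K] (n : ℕ) (φ : (Fin n → K) →ₗ[K] (Fin n → K)) :
    ∃ (b : Module.Basis (Fin n) K (Fin n → K)) (c : Fin n → K),
      ∀ i j, b.repr (φ (b j)) i = 0 ∨ b.repr (φ (b j)) i = 1 ∨ b.repr (φ (b j)) i = - c i := by
  classical
  obtain ⟨ι, _, p, hp, e, ⟨iso⟩⟩ := Module.equiv_directSum_of_isTorsion
    (R := Polynomial K) (M := Module.AEval' φ) (Module.AEval.isTorsion_of_finiteDimensional K (Fin n → K) φ)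
  choose d b c hb using fun i => cyc_basis (p i ^ e i) (pow_ne_zero _ (hp i).ne_zero)
  let B := DFinsupp.basis b
  let F : (Fin n → K) ≃ₗ[K] (Π₀ i, (Polynomial K ⧸ Submodule.span (Polynomial K) {p i ^ e i})) :=
    (Module.AEval'.of φ).trans (iso.restrictScalars K)
  have hF : ∀ v, F (φ v) = (Polynomial.X : Polynomial K) • F v := by
    intro v
    change iso (Module.AEval'.of φ (φ v)) = (Polynomial.X : Polynomial K) • iso (Module.AEval'.of φ v)
    rw [← map_smul, Module.AEval'.X_smul_of]
  let B' := B.map F.symm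
  have hcard : Fintype.card (Σ i, Fin (d i)) = Fintype.card (Fin n) := by
    rw [← Module.finrank_eq_card_basis B']; simp
  let r := Fintype.equivOfCardEq hcard
  refine ⟨B'.reindex r, fun i => c (r.symm i).1 (r.symm i).2, fun i j => ?_⟩
  have : (B'.reindex r).repr (φ ((B'.reindex r) j)) i =
      B.repr ((Polynomial.X : Polynomial K) • B (r.symm j)) (r.symm i) := by
    simp [B', hF]
  rw [this]
  beta_reduce
  generalize r.symm i = ik
  generalize r.symm j = jl
  obtain ⟨i, k⟩ := ik
  obtain ⟨j, l⟩ := jl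
  have h3 : ∀ x i k, B.repr x ⟨i, k⟩ = (b i).repr (x i) k := fun x i k => rfl
  have h1 : B ⟨j, l⟩ = DFinsupp.single j (b j l) := by
    apply B.repr.injective
    rw [B.repr_self]
    ext ⟨i, k⟩
    rw [h3]
    by_cases hij : j = i
    · subst hij
      by_cases hkl : l = k
      · subst hkl; simp
      · simp [hkl]
    · simp [hij]
  have h2 : (Polynomial.X : Polynomial K) • B ⟨j, l⟩ = DFinsupp.single j ((Polynomial.X : Polynomial K) • (b j l)) := by
    rw [h1, DFinsupp.single_smul]
  rw [h2]
  rw [h3]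
  by_cases hij : j = i
  · subst hij
    simpa using hb j k l
  · left
    simp [hij]

theorem exists_rcf {K : Type} [Field K] (n : ℕ) (A : Matrix (Fin n) (Fin n) K) :
    ∃ (f : Fin n → K) (J g : Matrix (Fin n) (Fin n) K), IsUnit g ∧ A * g = g * J ∧
      ∀ i j, J i j = 0 ∨ J i j = 1 ∨ J i j = - f i := by
  obtain ⟨b, c, h⟩ := exists_rcf_basis n (Matrix.toLin' A)
  refine ⟨c, LinearMap.toMatrix b b (Matrix.toLin' A), (Pi.basisFun K (Fin n)).toMatrix b, ?_, ?_, ?_⟩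
  · have := Module.Basis.invertibleToMatrix (Pi.basisFun K (Fin n)) b
    exact isUnit_of_invertible _
  · rw [basis_toMatrix_mul_linearMap_toMatrix]
    rw [← linearMap_toMatrix_mul_basis_toMatrix b (Pi.basisFun K (Fin n)) (Pi.basisFun K (Fin n))]
    rw [LinearMap.toMatrix_eq_toMatrix', LinearMap.toMatrix'_toLin']
  · intro i j
    rw [LinearMap.toMatrix_apply]
    exact h i j

theorem entries_mem {n : ℕ} {K : Type} [Field K] [Algebra ℂ K] (L : IntermediateField ℂ K)
    (g J A : Matrix (Fin n) (Fin n) K) (hg : IsUnit g) (hgL : ∀ i j, g i j ∈ L) (hJL : ∀ i j, J i j ∈ L)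
    (h : A * g = g * J) : ∀ i j, A i j ∈ L := by
  let g' : Matrix (Fin n) (Fin n) L := fun i j => ⟨g i j, hgL i j⟩
  let J' : Matrix (Fin n) (Fin n) L := fun i j => ⟨J i j, hJL i j⟩
  have eg : g = (algebraMap L K).mapMatrix g' := by ext i j; rfl
  have eJ : J = (algebraMap L K).mapMatrix J' := by ext i j; rfl
  have hd : g'.det ≠ 0 := by
    intro h0
    have : g.det = 0 := by rw [eg, ← RingHom.map_det, h0, map_zero]
    rw [Matrix.isUnit_iff_isUnit_det, this] at hg
    exact not_isUnit_zero hg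
  have hA : A = (algebraMap L K).mapMatrix (g' * J' * g'⁻¹) := by
    have h1 : g * (algebraMap L K).mapMatrix g'⁻¹ = 1 := by
      rw [eg, ← map_mul, Matrix.mul_nonsing_inv _ (isUnit_iff_ne_zero.mpr hd), map_one]
    rw [map_mul, map_mul, ← eg, ← eJ, ← h, mul_assoc, h1, mul_one]
  intro i j
  rw [hA]
  exact ((g' * J' * g'⁻¹) i j).2

theorem trdeg_comm (n : ℕ) {K : Type} [Field K] [Algebra ℂ K] (A B : Matrix (Fin n) (Fin n) K)
    (hAB : A * B = B * A) :
    ∃ (ι : Type) (_ : Fintype ι) (F : ι → K), Fintype.card ι ≤ n ^ 2 + n ∧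
      (∀ i j, A i j ∈ IntermediateField.adjoin ℂ (Set.range F)) ∧
      (∀ i j, B i j ∈ IntermediateField.adjoin ℂ (Set.range F)) := by
  obtain ⟨f, J, g₀, hg₀, hA₀, hJ⟩ := exists_rcf n A
  let E := IntermediateField.adjoin ℂ (Set.range f)
  have hJE : ∀ i j, J i j ∈ E := by
    intro i j
    rcases hJ i j with h | h | h
    · rw [h]; exact zero_mem _
    · rw [h]; exact one_mem _
    · rw [h]; exact neg_mem (IntermediateField.subset_adjoin _ _ ⟨i, rfl⟩)
  let J' : Matrix (Fin n) (Fin n) E := fun i j => ⟨J i j, hJE i j⟩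
  have eJ : J'.map (algebraMap E K) = J := by ext i j; rfl
  obtain ⟨κ₁, T₁, _, _, e₁, C₁, h₁⟩ := sylv_param A J
  obtain ⟨κ₂, T₂, _, _, e₂, C₂, h₂⟩ := sylv_param J' J'
  replace h₁ := h₁ K
  replace h₂ := h₂ K
  rw [eJ] at h₂
  simp only [Algebra.algebraMap_self, RingHom.coe_id, Matrix.map_id, id] at h₁
  have hcard := card_T_le e₁ C₁ e₂ (C₂.map (algebraMap E K)) A J g₀ hg₀ hA₀ h₁ h₂
  have hcard1 : Fintype.card κ₁ + Fintype.card T₁ = n * n := by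
    have := Fintype.card_congr e₁
    simpa using this
  -- choose g
  obtain ⟨w, hw⟩ := exists_point (extM e₁ C₁) _ (by
    rw [← eq_extM e₁ C₁ g₀ ((h₁ g₀).mp hA₀)]
    exact ((Matrix.isUnit_iff_isUnit_det _).mp hg₀).ne_zero)
  set g := extM e₁ C₁ (fun t => algebraMap ℂ K (w t)) with hg
  have hgu : IsUnit g := (Matrix.isUnit_iff_isUnit_det _).mpr (isUnit_iff_ne_zero.mpr hw)
  have hgA : A * g = g * J := by
    rw [h₁]; intro u; rw [hg]; simp only [extM_inl, extM_inr]
  obtain ⟨gu, hgu'⟩ := hgu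
  let D : Matrix (Fin n) (Fin n) K := (↑gu⁻¹ : Matrix (Fin n) (Fin n) K) * B * g
  have hBD : B * g = g * D := by
    simp only [D, ← hgu', ← mul_assoc]; simp
  have hJ' : J = (↑gu⁻¹ : Matrix (Fin n) (Fin n) K) * A * g := by
    rw [mul_assoc, hgA, ← hgu', ← mul_assoc]; simp
  have hgg : g * (↑gu⁻¹ : Matrix (Fin n) (Fin n) K) = 1 := by rw [← hgu']; simp
  have hJD : J * D = D * J := by
    simp only [D]
    rw [hJ']
    calc _ = (↑gu⁻¹ : Matrix (Fin n) (Fin n) K) * A * (g * (↑gu⁻¹ : Matrix (Fin n) (Fin n) K)) * B * g := by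
            simp only [mul_assoc]
      _ = (↑gu⁻¹ : Matrix (Fin n) (Fin n) K) * (A * B) * g := by rw [hgg]; simp only [mul_assoc, one_mul]
      _ = (↑gu⁻¹ : Matrix (Fin n) (Fin n) K) * B * (g * (↑gu⁻¹ : Matrix (Fin n) (Fin n) K)) * A * g := by
            rw [hAB, hgg]; simp only [mul_assoc, one_mul]
      _ = _ := by simp only [mul_assoc]
  have hD := (h₂ D).mp hJD
  let F : Fin n ⊕ κ₁ ⊕ T₂ → K := Sum.elim f (Sum.elim
    (fun u => g (e₁ (Sum.inl u)).1 (e₁ (Sum.inl u)).2)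
    (fun t => D (e₂ (Sum.inr t)).1 (e₂ (Sum.inr t)).2))
  let L := IntermediateField.adjoin ℂ (Set.range F)
  have hFL : ∀ x, F x ∈ L := fun x => IntermediateField.subset_adjoin _ _ ⟨x, rfl⟩
  have hEL : E ≤ L := by
    refine IntermediateField.adjoin_le_iff.mpr ?_
    rintro _ ⟨i, rfl⟩
    exact hFL (Sum.inl i)
  have hgL : ∀ i j, g i j ∈ L := by
    intro i j
    obtain ⟨x, hx⟩ := e₁.surjective (i, j)
    have h1 : i = (e₁ x).1 := by rw [hx]
    have h2 : j = (e₁ x).2 := by rw [hx]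
    rw [h1, h2]
    rcases x with u | t
    · exact hFL (Sum.inr (Sum.inl u))
    · rw [hg, extM_inr]; exact L.algebraMap_mem _
  have hDL : ∀ i j, D i j ∈ L := by
    intro i j
    obtain ⟨x, hx⟩ := e₂.surjective (i, j)
    have h1 : i = (e₂ x).1 := by rw [hx]
    have h2 : j = (e₂ x).2 := by rw [hx]
    rw [h1, h2]
    rcases x with u | t
    · rw [hD]
      refine sum_mem fun t _ => mul_mem (hEL (C₂ u t).2) (hFL (Sum.inr (Sum.inr t)))
    · exact hFL (Sum.inr (Sum.inr t))
  refine ⟨Fin n ⊕ κ₁ ⊕ T₂, inferInstance, F, ?_, ?_, ?_⟩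
  · simp only [Fintype.card_sum, Fintype.card_fin]
    nlinarith
  · exact entries_mem L g J A ⟨gu, hgu'⟩ hgL (fun i j => hEL (hJE i j)) hgA
  · exact entries_mem L g D B ⟨gu, hgu'⟩ hgL hDL hBD

theorem upper_bound (n : ℕ) :
    ringKrullDim
      ((MvPolynomial ((Fin n × Fin n) ⊕ (Fin n × Fin n) ⊕ Fin 2) ℂ) ⧸
        Ideal.span
          ({p | ∃ i j, p = (genX n * genY n - genY n * genX n) i j} ∪
            {genS n * (genX n).det - 1, genT n * (genY n).det - 1})) ≤
    ((n ^ 2 + n : ℕ) : WithBot ℕ∞) := by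
  set I := Ideal.span
          ({p | ∃ i j, p = (genX n * genY n - genY n * genX n) i j} ∪
            {genS n * (genX n).det - 1, genT n * (genY n).det - 1}) with hI
  refine dim_upper (n ^ 2 + n) ?_
  intro K _ _ φ s x hx
  let ψ : MvPolynomial ((Fin n × Fin n) ⊕ (Fin n × Fin n) ⊕ Fin 2) ℂ →ₐ[ℂ] K := φ.comp (Ideal.Quotient.mkₐ ℂ I)
  have hψ : ∀ p ∈ I, ψ p = 0 := by
    intro p hp
    have : Ideal.Quotient.mkₐ ℂ I p = 0 := by
      simpa using Ideal.Quotient.eq_zero_iff_mem.mpr hp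
    simp only [ψ, AlgHom.comp_apply, this, map_zero]
  let A : Matrix (Fin n) (Fin n) K := (ψ : _ →+* K).mapMatrix (genX n)
  let B : Matrix (Fin n) (Fin n) K := (ψ : _ →+* K).mapMatrix (genY n)
  have hAB : A * B = B * A := by
    rw [← sub_eq_zero]
    simp only [A, B, ← map_mul, ← map_sub]
    ext i j
    exact hψ _ (Ideal.subset_span (Or.inl ⟨i, j, rfl⟩))
  have hs : ψ (genS n) * A.det = 1 := by
    have := hψ _ (Ideal.subset_span (Or.inr (Or.inl rfl)))
    simp only [map_sub, map_mul, map_one] at this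
    rw [sub_eq_zero] at this
    rw [← this]
    simp only [A, ← RingHom.map_det]; rfl
  have ht : ψ (genT n) * B.det = 1 := by
    have := hψ _ (Ideal.subset_span (Or.inr (Or.inr rfl)))
    simp only [map_sub, map_mul, map_one] at this
    rw [sub_eq_zero] at this
    rw [← this]
    simp only [B, ← RingHom.map_det]; rfl
  obtain ⟨ι, _, F, hcard, hA, hB⟩ := trdeg_comm n A B hAB
  set L := IntermediateField.adjoin ℂ (Set.range F) with hL
  have hdet : ∀ M : Matrix (Fin n) (Fin n) K, (∀ i j, M i j ∈ L) → M.det ∈ L := by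
    intro M hM
    rw [Matrix.det_apply]
    refine sum_mem fun σ _ => ?_
    rw [Units.smul_def]
    exact zsmul_mem (prod_mem fun i _ => hM _ _) _
  have hall : ∀ p, ψ p ∈ L := by
    intro p
    induction p using MvPolynomial.induction_on with
    | C a =>
      have : ψ (C a) = algebraMap ℂ K a := ψ.commutes a
      rw [this]; exact L.algebraMap_mem a
    | add p q hp hq => rw [map_add]; exact add_mem hp hq
    | mul_X p i hp =>
      rw [map_mul]
      refine mul_mem hp ?_
      rcases i with ⟨i, j⟩ | ⟨i, j⟩ | i
      · exact hA i j
      · exact hB i j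
      · fin_cases i
        · have : ψ (genS n) ∈ L := by
            rw [eq_inv_of_mul_eq_one_left hs]; exact inv_mem (hdet A hA)
          exact this
        · have : ψ (genT n) ∈ L := by
            rw [eq_inv_of_mul_eq_one_left ht]; exact inv_mem (hdet B hB)
          exact this
  refine (card_le_of_adjoin F s _ hx fun i => ?_).trans hcard
  obtain ⟨p, hp⟩ := Ideal.Quotient.mkₐ_surjective ℂ I (x i)
  rw [← hp]
  exact hall p

abbrev PP (n : ℕ) := MvPolynomial ((Fin n × Fin n) ⊕ Fin n) ℂ

theorem comm_aux {R : Type*} [CommRing R] {n : ℕ} (A : Matrix (Fin n) (Fin n) R) (c : Fin n → R) :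
    A * (∑ l, c l • A ^ (l : ℕ)) = (∑ l, c l • A ^ (l : ℕ)) * A := by
  simp only [Finset.mul_sum, Finset.sum_mul, mul_smul_comm, smul_mul_assoc, ← pow_succ, ← pow_succ']

theorem krylov_aux {R : Type*} [CommRing R] {n : ℕ} (A W : Matrix (Fin n) (Fin n) R) (c : Fin n → R)
    (o : Fin n) (hW : ∀ i l : Fin n, W i l = (A ^ (l : ℕ)) i o) (l : Fin n) :
    W.det * c l = ∑ i, W.adjugate l i * (∑ l, c l • A ^ (l : ℕ)) i o := by
  have h1 : W.mulVec c = fun i => (∑ l, c l • A ^ (l : ℕ)) i o := by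
    ext1 i
    simp only [Matrix.mulVec, dotProduct, hW, Matrix.sum_apply, Matrix.smul_apply, smul_eq_mul]
    exact Finset.sum_congr rfl fun _ _ => mul_comm _ _
  have h2 : (W.adjugate * W).mulVec c = W.adjugate.mulVec (fun i => (∑ l, c l • A ^ (l : ℕ)) i o) := by
    rw [← h1, Matrix.mulVec_mulVec]
  rw [Matrix.adjugate_mul, Matrix.smul_mulVec, Matrix.one_mulVec] at h2
  exact congrFun h2 l

theorem mapM_smul_aux {R T : Type*} [CommRing R] [CommRing T] {n : ℕ} (ev : R →+* T)
    (A : Matrix (Fin n) (Fin n) R) (c : Fin n → R) :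
    ev.mapMatrix (∑ l, c l • A ^ (l : ℕ)) = ∑ l, ev (c l) • (ev.mapMatrix A) ^ (l : ℕ) := by
  rw [map_sum]
  refine Finset.sum_congr rfl fun l _ => ?_
  rw [← map_pow]
  ext i j
  simp

theorem shift_pow (n : ℕ) (hn : 0 < n) (S : Matrix (Fin n) (Fin n) ℂ)
    (hS : ∀ i j : Fin n, S i j = if (i : ℕ) = (j : ℕ) + 1 then 1 else 0) (l : ℕ) (hl : l < n) (i : Fin n) :
    (S ^ l) i ⟨0, hn⟩ = if (i : ℕ) = l then 1 else 0 := by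
  induction l generalizing i with
  | zero =>
    simp [Matrix.one_apply, Fin.ext_iff]
  | succ l ih =>
    rw [pow_succ', Matrix.mul_apply]
    rw [Finset.sum_eq_single ⟨l, by omega⟩]
    · rw [ih (by omega), hS]; simp
    · intro k _ hk
      rw [ih (by omega)]
      have : (k : ℕ) ≠ l := fun h => hk (Fin.ext h)
      simp [this]
    · simp

theorem lower_bound (n : ℕ) (hn : 1 ≤ n) :
    ((n ^ 2 + n : ℕ) : WithBot ℕ∞) ≤ ringKrullDim
      ((MvPolynomial ((Fin n × Fin n) ⊕ (Fin n × Fin n) ⊕ Fin 2) ℂ) ⧸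
        Ideal.span
          ({p | ∃ i j, p = (genX n * genY n - genY n * genX n) i j} ∪
            {genS n * (genX n).det - 1, genT n * (genY n).det - 1})) := by
  set I := Ideal.span
          ({p | ∃ i j, p = (genX n * genY n - genY n * genX n) i j} ∪
            {genS n * (genX n).det - 1, genT n * (genY n).det - 1}) with hI
  let o : Fin n := ⟨0, hn⟩
  let A₀ : Matrix (Fin n) (Fin n) (PP n) := fun i j => X (Sum.inl (i, j))
  let c₀ : Fin n → (PP n) := fun l => X (Sum.inr l)
  let B₀ : Matrix (Fin n) (Fin n) (PP n) := ∑ l, c₀ l • A₀ ^ (l : ℕ)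
  let W₀ : Matrix (Fin n) (Fin n) (PP n) := fun i l => (A₀ ^ (l : ℕ)) i o
  have hcomm₀ : A₀ * B₀ = B₀ * A₀ := comm_aux A₀ c₀
  have hW₀c : ∀ l, W₀.det * c₀ l = ∑ i, W₀.adjugate l i * B₀ i o :=
    krylov_aux A₀ W₀ c₀ o fun _ _ => rfl
  have hA₀ : A₀.det ≠ 0 := by
    intro h
    let ev : (PP n) →+* ℂ := (aeval (Sum.elim (fun p => (1 : Matrix (Fin n) (Fin n) ℂ) p.1 p.2) (fun _ => 0)) : (PP n) →ₐ[ℂ] ℂ).toRingHom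
    have h1 : ev.mapMatrix A₀ = 1 := by
      ext i j; change ev (X (Sum.inl (i, j))) = _; simp [ev]
    have := congrArg ev h
    rw [RingHom.map_det, h1] at this
    simp at this
  have hB₀ : B₀.det ≠ 0 := by
    intro h
    let ev : (PP n) →+* ℂ := (aeval (Sum.elim (fun p => (1 : Matrix (Fin n) (Fin n) ℂ) p.1 p.2) (fun l => if l = o then 1 else 0)) : (PP n) →ₐ[ℂ] ℂ).toRingHom
    have h0 : ev.mapMatrix A₀ = 1 := by
      ext i j; change ev (X (Sum.inl (i, j))) = _; simp [ev]
    have hc : ∀ l, ev (c₀ l) = if l = o then 1 else 0 := fun l => by simp [ev, c₀]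
    have h1 : ev.mapMatrix B₀ = 1 := by
      rw [mapM_smul_aux, h0]
      simp only [hc, one_pow]
      simp
    have := congrArg ev h
    rw [RingHom.map_det, h1] at this
    simp at this
  have hW₀ : W₀.det ≠ 0 := by
    intro h
    let S : Matrix (Fin n) (Fin n) ℂ := fun i j => if (i : ℕ) = (j : ℕ) + 1 then 1 else 0
    let ev : (PP n) →+* ℂ := (aeval (Sum.elim (fun p => S p.1 p.2) (fun l => 0)) : (PP n) →ₐ[ℂ] ℂ).toRingHom
    have h0 : ev.mapMatrix A₀ = S := by
      ext i j; change ev (X (Sum.inl (i, j))) = _; simp [ev]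
    have h1 : ev.mapMatrix W₀ = 1 := by
      ext i l
      have : ev.mapMatrix W₀ i l = (ev.mapMatrix A₀ ^ (l : ℕ)) i o := by
        rw [← map_pow]; rfl
      rw [this, h0, shift_pow n hn S (fun _ _ => rfl) l l.2 i, Matrix.one_apply]
      simp [Fin.ext_iff]
    have := congrArg ev h
    rw [RingHom.map_det, h1] at this
    simp at this
  -- pass to (FractionRing (PP n))
  let a : (PP n) →+* (FractionRing (PP n)) := algebraMap (PP n) (FractionRing (PP n))
  have ha : Function.Injective a := IsFractionRing.injective (PP n) (FractionRing (PP n))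
  let ψ : MvPolynomial ((Fin n × Fin n) ⊕ (Fin n × Fin n) ⊕ Fin 2) ℂ →ₐ[ℂ] (FractionRing (PP n)) :=
    aeval (Sum.elim (fun p => a (A₀ p.1 p.2)) (Sum.elim (fun p => a (B₀ p.1 p.2))
      (fun i => if i = 0 then (a A₀.det)⁻¹ else (a B₀.det)⁻¹)))
  have hX : (ψ : _ →+* (FractionRing (PP n))).mapMatrix (genX n) = a.mapMatrix A₀ := by
    ext i j; simp [ψ, genX]
  have hY : (ψ : _ →+* (FractionRing (PP n))).mapMatrix (genY n) = a.mapMatrix B₀ := by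
    ext i j; simp [ψ, genY]
  have hS : ψ (genS n) = (a A₀.det)⁻¹ := by simp [ψ, genS]
  have hT : ψ (genT n) = (a B₀.det)⁻¹ := by simp [ψ, genT]
  have hker : ∀ p ∈ I, ψ p = 0 := by
    intro p hp
    have : I ≤ RingHom.ker (ψ : _ →+* (FractionRing (PP n))) := by
      rw [hI, Ideal.span_le]
      rintro p (⟨i, j, rfl⟩ | rfl | rfl)
      · have : (ψ : _ →+* (FractionRing (PP n))).mapMatrix (genX n * genY n - genY n * genX n) = 0 := by
          rw [map_sub, map_mul, map_mul, hX, hY, ← map_mul, ← map_mul, hcomm₀, sub_self]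
        exact congrFun (congrFun this i) j
      · change ψ (_ - 1) = 0
        have : ψ (genX n).det = a A₀.det := by
          have := RingHom.map_det (ψ : _ →+* (FractionRing (PP n))) (genX n)
          rw [hX, ← RingHom.map_det] at this
          exact this
        rw [map_sub, map_mul, map_one, hS, this, inv_mul_cancel₀, sub_self]
        exact fun h => hA₀ (ha (by rw [h, map_zero]))
      · change ψ (_ - 1) = 0
        have : ψ (genY n).det = a B₀.det := by
          have := RingHom.map_det (ψ : _ →+* (FractionRing (PP n))) (genY n)
          rw [hY, ← RingHom.map_det] at this
          exact this
        rw [map_sub, map_mul, map_one, hT, this, inv_mul_cancel₀, sub_self]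
        exact fun h => hB₀ (ha (by rw [h, map_zero]))
    exact this hp
  let φ : (MvPolynomial ((Fin n × Fin n) ⊕ (Fin n × Fin n) ⊕ Fin 2) ℂ ⧸ I) →ₐ[ℂ] (FractionRing (PP n)) :=
    Ideal.Quotient.liftₐ I ψ hker
  have hφ : ∀ p, ψ p ∈ φ.range := fun p => ⟨Ideal.Quotient.mk I p, rfl⟩
  have hAr : ∀ i j, a (A₀ i j) ∈ φ.range := fun i j => by
    have := hφ (genX n i j)
    have h2 : ψ (genX n i j) = a (A₀ i j) := congrFun (congrFun hX i) j
    rwa [h2] at this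
  have hBr : ∀ i j, a (B₀ i j) ∈ φ.range := fun i j => by
    have := hφ (genY n i j)
    have h2 : ψ (genY n i j) = a (B₀ i j) := congrFun (congrFun hY i) j
    rwa [h2] at this
  -- the matrices over the range
  let A' : Matrix (Fin n) (Fin n) φ.range := fun i j => ⟨a (A₀ i j), hAr i j⟩
  let W' : Matrix (Fin n) (Fin n) φ.range := fun i l => (A' ^ (l : ℕ)) i o
  let r : φ.range →+* (FractionRing (PP n)) := algebraMap φ.range (FractionRing (PP n))
  have hA' : r.mapMatrix A' = a.mapMatrix A₀ := by ext i j; rfl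
  have hW' : r.mapMatrix W' = a.mapMatrix W₀ := by
    ext i l
    have h1 : r.mapMatrix W' i l = (r.mapMatrix A' ^ (l : ℕ)) i o := by rw [← map_pow]; rfl
    have h2 : a.mapMatrix W₀ i l = (a.mapMatrix A₀ ^ (l : ℕ)) i o := by rw [← map_pow]; rfl
    rw [h1, h2, hA']
  have hWdet : a W₀.det ∈ φ.range := by
    rw [RingHom.map_det, ← hW', ← RingHom.map_det]; exact Subtype.mem _
  have hWadj : ∀ i j, a (W₀.adjugate i j) ∈ φ.range := by
    intro i j
    have : a.mapMatrix W₀.adjugate = r.mapMatrix W'.adjugate := by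
      rw [RingHom.map_adjugate, RingHom.map_adjugate, hW']
    have := congrFun (congrFun this i) j
    have h2 : a (W₀.adjugate i j) = r (W'.adjugate i j) := this
    rw [h2]; exact Subtype.mem _
  have halg0 : ∀ x ∈ φ.range, IsAlgebraic φ.range x := fun x hx =>
    isAlgebraic_algebraMap (⟨x, hx⟩ : φ.range)
  have hd : a W₀.det ≠ 0 := fun h => hW₀ (ha (by rw [h, map_zero]))
  have hc : ∀ l, IsAlgebraic φ.range (a (c₀ l)) := by
    intro l
    have h1 : a W₀.det * a (c₀ l) ∈ φ.range := by
      rw [← map_mul, hW₀c, map_sum]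
      exact sum_mem fun i _ => by rw [map_mul]; exact mul_mem (hWadj _ _) (hBr _ _)
    have h2 : a (c₀ l) = (a W₀.det)⁻¹ * (a W₀.det * a (c₀ l)) := by
      rw [inv_mul_cancel_left₀ hd]
    rw [h2]
    exact (halg0 _ hWdet).inv.mul (halg0 _ h1)
  have hP : ∀ p : (PP n), IsAlgebraic φ.range (a p) := by
    intro p
    induction p using MvPolynomial.induction_on with
    | C z => exact halg0 _ (φ.range.algebraMap_mem z)
    | add p q hp hq => rw [map_add]; exact hp.add hq
    | mul_X p i hp =>
      rw [map_mul]
      refine hp.mul ?_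
      rcases i with ⟨i, j⟩ | l
      · exact halg0 _ (hAr i j)
      · exact hc l
  have : Algebra.IsAlgebraic φ.range (FractionRing (PP n)) := by
    refine ⟨fun x => ?_⟩
    obtain ⟨p, q, -, rfl⟩ := IsFractionRing.div_surjective (A := (PP n)) x
    rw [div_eq_mul_inv]
    exact (hP p).mul (hP q).inv
  have hind : AlgebraicIndependent ℂ (fun i : (Fin n × Fin n) ⊕ Fin n => (IsScalarTower.toAlgHom ℂ (PP n) (FractionRing (PP n))) (X i)) :=
    (MvPolynomial.algebraicIndependent_X _ ℂ).map' (f := IsScalarTower.toAlgHom ℂ (PP n) (FractionRing (PP n))) ha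
  let eq : Fin (n ^ 2 + n) ≃ (Fin n × Fin n) ⊕ Fin n :=
    Fintype.equivOfCardEq (by simp [sq])
  exact dim_lower (n ^ 2 + n) (FractionRing (PP n)) φ _ (hind.comp eq eq.injective)

/-- The coordinate ring of the commuting variety `C(GL_n)` has Krull dimension `n² + n`. -/
theorem krullDim_commutingVariety_GL (n : ℕ) (hn : 1 ≤ n) :
    ringKrullDim
      ((MvPolynomial ((Fin n × Fin n) ⊕ (Fin n × Fin n) ⊕ Fin 2) ℂ) ⧸
        Ideal.span
          ({p | ∃ i j, p = (genX n * genY n - genY n * genX n) i j} ∪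
            {genS n * (genX n).det - 1, genT n * (genY n).det - 1})) =
    ((n ^ 2 + n : ℕ) : WithBot (WithTop ℕ)) := by
  exact le_antisymm (upper_bound n) (lower_bound n hn)
end

section
/- For every rational number x with 1/2 < x ≤ 1, there exist a natural number n ≥ 2 and natural numbers a, b (possibly zero) with a·n² + b > 0 such that ((a·n² + b) + (a·n + b)) / (2·(a·n² + b)) = x. (This realizes x as the commuting probability p(G) = (dim G + rank G)/(2·dim G) of the reductive group G = GL_n^a × 𝔾_m^b, which has dimension a·n² + b and rank a·n + b.) -/
/-- Every rational number in `(1/2, 1]` is the commuting probability of a reductive group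
of the form `GL_n^a × 𝔾_m^b`, of dimension `a·n² + b` and rank `a·n + b`. -/
theorem exists_reductive_commuting_probability (x : ℚ) (hx1 : 1 / 2 < x) (hx2 : x ≤ 1) :
    ∃ n a b : ℕ, 2 ≤ n ∧ 0 < a * n ^ 2 + b ∧
      (((a * n ^ 2 + b : ℕ) : ℚ) + ((a * n + b : ℕ) : ℚ)) /
        (2 * ((a * n ^ 2 + b : ℕ) : ℚ)) = x := by
  obtain ⟨k, d, h⟩ : ∃ k d : ℕ, (2 * x - 1) * ((k : ℚ) + 1 + d) = k + 1 := by
    have hy0 : 0 < 2 * x - 1 := by linarith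
    have hy1 : 2 * x - 1 ≤ 1 := by linarith
    generalize 2 * x - 1 = y at hy0 hy1
    have hp : 0 < y.num := Rat.num_pos.mpr hy0
    have hq : y.num ≤ y.den := by
      have h1 : (y.num : ℚ) ≤ y.den := by
        rw [← Rat.mul_den_eq_num]
        have : (0 : ℚ) ≤ y.den := by positivity
        nlinarith
      exact_mod_cast h1
    obtain ⟨k, hk⟩ := Int.eq_ofNat_of_zero_le (show 0 ≤ y.num - 1 by omega)
    obtain ⟨d, hd⟩ := Int.eq_ofNat_of_zero_le (show 0 ≤ (y.den : ℤ) - y.num by omega)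
    refine ⟨k, d, ?_⟩
    have e1 : (y.num : ℚ) = k + 1 := by
      have : y.num = k + 1 := by omega
      rw [this]; push_cast; ring
    have e2 : (y.den : ℚ) = k + 1 + d := by
      have : y.den = k + 1 + d := by omega
      rw [this]; push_cast; ring
    rw [← e2, ← e1]
    exact Rat.mul_den_eq_num y
  refine ⟨2 * (k + 1 + d), d, 2 * (k + 1 + d) ^ 2 * (2 * k + 1), by omega, by positivity, ?_⟩
  have hx : x = ((k : ℚ) + 1 + ((k : ℚ) + 1 + d)) / (2 * ((k : ℚ) + 1 + d)) := by
    rw [eq_div_iff (by positivity)]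
    linarith
  rw [hx, div_eq_div_iff (by positivity) (by positivity)]
  push_cast
  ring
end

section
/- For every rational number x with 1/2 < x ≤ 1, there exist a natural number m ≥ 1 and natural numbers a, b (possibly zero) with a·m(m+1)/2 + b > 0 such that ((a·m(m+1)/2 + b) + (a·m + b)) / (2·(a·m(m+1)/2 + b)) = x. (This realizes x as the commuting probability of the nilpotent group G = U^a × 𝔾_a^b, where U is the group of upper unitriangular (m+1)×(m+1) matrices, of dimension m(m+1)/2 and regular rank m, and 𝔾_a is the additive group, of dimension 1 and regular rank 1.) -/
/-- Every rational number in `(1/2, 1]` is the commuting probability of a nilpotent group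
of the form `U^a × 𝔾_a^b`, where `U` is the group of upper unitriangular
`(m+1) × (m+1)` matrices, of dimension `m(m+1)/2` and regular rank `m`. -/
theorem exists_nilpotent_commuting_probability (x : ℚ) (hx1 : 1 / 2 < x) (hx2 : x ≤ 1) :
    ∃ m a b : ℕ, 1 ≤ m ∧ 0 < a * (m * (m + 1) / 2) + b ∧
      (((a * (m * (m + 1) / 2) + b : ℕ) : ℚ) + ((a * m + b : ℕ) : ℚ)) /
        (2 * ((a * (m * (m + 1) / 2) + b : ℕ) : ℚ)) = x := by
  obtain ⟨y, hy⟩ : ∃ y : ℚ, y = 2 * x - 1 := ⟨_, rfl⟩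
  have hy0 : 0 < y := by linarith
  have hy1 : y ≤ 1 := by linarith
  have hnum : 0 < y.num := Rat.num_pos.mpr hy0
  have hle : y.num ≤ (y.den : ℤ) := by
    have h := Rat.num_div_den y
    have hd : (0 : ℚ) < y.den := by exact_mod_cast y.den_pos
    rw [← h, div_le_one hd] at hy1
    exact_mod_cast hy1
  obtain ⟨k, hk⟩ : ∃ k : ℕ, y.num = k + 1 := ⟨(y.num - 1).toNat, by omega⟩
  obtain ⟨c, hc⟩ : ∃ c : ℕ, y.den = k + 1 + c := ⟨y.den - (k + 1), by omega⟩
  have hyq : y = ((k : ℚ) + 1) / ((k : ℚ) + 1 + c) := by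
    have h := Rat.num_div_den y
    rw [hk, hc] at h
    rw [← h]
    push_cast
    rfl
  have hx : x = (y + 1) / 2 := by linarith
  obtain ⟨q, hq⟩ : ∃ q : ℕ, q = k + 1 + c := ⟨_, rfl⟩
  have hT : 2 * q * (2 * q + 1) / 2 = q * (2 * q + 1) := by
    rw [mul_assoc, Nat.mul_div_cancel_left _ (by norm_num)]
  have hN : c * (q * (2 * q + 1)) + q * (2 * q * k + k + 1) = q * q * (2 * (k + c) + 1) := by
    subst hq; ring
  have hR : c * (2 * q) + q * (2 * q * k + k + 1) = (k + 1) * q * (2 * (k + c) + 1) := by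
    subst hq; ring
  have hqpos : 0 < q := by omega
  refine ⟨2 * q, c, q * (2 * q * k + k + 1), by omega, ?_, ?_⟩
  · positivity
  · rw [hT, hN, hR, hx, hyq]
    have hq' : (k : ℚ) + 1 + c = q := by rw [hq]; push_cast; rfl
    rw [hq']
    have hq0 : (q : ℚ) ≠ 0 := by positivity
    have hs : (2 * ((k : ℚ) + c) + 1) ≠ 0 := by positivity
    push_cast
    field_simp
    ring
end

section
/- Let U be the group of upper unitriangular 3×3 matrices over ℂ. Let g = [[1, a, b],[0, 1, c],[0, 0, 1]] and h = [[1, a', b'],[0, 1, c'],[0, 0, 1]] be non-central elements of U, i.e. (a, c) ≠ (0, 0) and (a', c') ≠ (0, 0). Then the centralizers Z_U(g) and Z_U(h) are conjugate in U (there exists u ∈ U with u·Z_U(g)·u⁻¹ = Z_U(h)) if and only if a·c' = c·a'. -/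
/-- `m` is an upper unitriangular `3 × 3` matrix. -/
def IsUnitriangular (m : Matrix (Fin 3) (Fin 3) ℂ) : Prop :=
  m 0 0 = 1 ∧ m 1 1 = 1 ∧ m 2 2 = 1 ∧ m 1 0 = 0 ∧ m 2 0 = 0 ∧ m 2 1 = 0

/-- The centraliser, in the group `U` of upper unitriangular `3 × 3` matrices,
of a matrix `g`. -/
def ZU (g : Matrix (Fin 3) (Fin 3) ℂ) : Set (Matrix (Fin 3) (Fin 3) ℂ) :=
  {u | IsUnitriangular u ∧ u * g = g * u}

lemma mem_ZU_iff (a b c : ℂ) (u : Matrix (Fin 3) (Fin 3) ℂ) :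
    u ∈ ZU !![1, a, b; 0, 1, c; 0, 0, 1] ↔ IsUnitriangular u ∧ u 0 1 * c = a * u 1 2 := by
  unfold ZU
  simp only [Set.mem_setOf_eq]
  refine and_congr_right ?_
  rintro ⟨h1, h2, h3, h4, h5, h6⟩
  constructor
  · intro h
    have := congrFun (congrFun h 0) 2
    simp [Matrix.mul_apply, Fin.sum_univ_three, h1, h2, h3, h4, h5, h6] at this
    linear_combination this
  · intro h
    ext i j
    fin_cases i <;> fin_cases j <;>
      simp [Matrix.mul_apply, Fin.sum_univ_three, h1, h2, h3, h4, h5, h6]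
    · ring
    · linear_combination h
    · ring

lemma prop_aux {a c a' c' x y : ℂ} (hg : ¬(a = 0 ∧ c = 0)) (h : a * c' = c * a')
    (hx : x * c = a * y) : x * c' = a' * y := by
  by_cases ha : a = 0
  · have hc : c ≠ 0 := fun hc => hg ⟨ha, hc⟩
    apply mul_left_cancel₀ hc
    linear_combination c' * hx + y * h
  · apply mul_left_cancel₀ ha
    linear_combination x * h + a' * hx

/-- For non-central elements `g = [[1,a,b],[0,1,c],[0,0,1]]` and
`h = [[1,a',b'],[0,1,c'],[0,0,1]]` of the unitriangular group `U`, the centralisers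
`Z_U(g)` and `Z_U(h)` are conjugate in `U` if and only if `a·c' = c·a'`. -/
theorem unitriangular_centralizers_conjugate_iff (a b c a' b' c' : ℂ)
    (hg : ¬(a = 0 ∧ c = 0)) (hh : ¬(a' = 0 ∧ c' = 0)) :
    (∃ u : Matrix (Fin 3) (Fin 3) ℂ, IsUnitriangular u ∧
        (fun m => u * m * u⁻¹) '' ZU !![1, a, b; 0, 1, c; 0, 0, 1] =
          ZU !![1, a', b'; 0, 1, c'; 0, 0, 1]) ↔
      a * c' = c * a' := by
  constructor
  · rintro ⟨u, hu, he⟩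
    have hm : !![1, a, b; 0, 1, c; 0, 0, 1] ∈ ZU !![1, a, b; 0, 1, c; 0, 0, 1] := by
      rw [mem_ZU_iff]
      simp [IsUnitriangular]
    have hk := he ▸ Set.mem_image_of_mem (fun m => u * m * u⁻¹) hm
    obtain ⟨h1, h2, h3, h4, h5, h6⟩ := hu
    have hdet : IsUnit u.det := by
      rw [Matrix.det_fin_three]
      simp [h1, h2, h3, h4, h5, h6]
    have hmul : (u * !![1, a, b; 0, 1, c; 0, 0, 1] * u⁻¹) * u
        = u * !![1, a, b; 0, 1, c; 0, 0, 1] :=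
      Matrix.nonsing_inv_mul_cancel_right _ _ hdet
    generalize u * !![1, a, b; 0, 1, c; 0, 0, 1] * u⁻¹ = k at hk hmul
    obtain ⟨⟨k1, k2, k3, k4, k5, k6⟩, hk⟩ := (mem_ZU_iff _ _ _ _).1 hk
    have e1 := congrFun (congrFun hmul 0) 1
    have e2 := congrFun (congrFun hmul 1) 2
    simp [Matrix.mul_apply, Fin.sum_univ_three, h1, h2, h3, h4, h5, h6,
      k1, k2, k3, k4, k5, k6] at e1 e2
    linear_combination hk - c' * e1 + a' * e2
  · intro h
    refine ⟨1, by simp [IsUnitriangular], ?_⟩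
    ext m
    simp only [inv_one, one_mul, mul_one, Set.image_id']
    rw [mem_ZU_iff, mem_ZU_iff]
    exact and_congr_right fun _ =>
      ⟨prop_aux hg h, prop_aux hh (by linear_combination -h)⟩
end

section
/- Let U be the group of upper unitriangular 3×3 matrices over ℂ, and let x = [[1, 1, 1],[0, 1, 0],[0, 0, 1]] and y = [[1, 0, 1],[0, 1, 1],[0, 0, 1]]. Then the centralizers Z_U(x) and Z_U(y) are not conjugate in U: there is no u ∈ U with u·Z_U(x)·u⁻¹ = Z_U(y). -/
/-- For `x = [[1,1,1],[0,1,0],[0,0,1]]` and `y = [[1,0,1],[0,1,1],[0,0,1]]` in the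
unitriangular group `U`, the centralisers `Z_U(x)` and `Z_U(y)` are not conjugate
in `U`: there is no `u ∈ U` with `u · Z_U(x) · u⁻¹ = Z_U(y)`. -/
theorem unitriangular_centralizers_not_conjugate :
    ¬ ∃ u : Matrix (Fin 3) (Fin 3) ℂ, IsUnitriangular u ∧
        (fun m => u * m * u⁻¹) '' ZU !![1, 1, 1; 0, 1, 0; 0, 0, 1] =
          ZU !![1, 0, 1; 0, 1, 1; 0, 0, 1] := by
  rintro ⟨u, ⟨h00, h11, h22, h10, h20, h21⟩, h⟩
  have hx : (!![1, 1, 1; 0, 1, 0; 0, 0, 1] : Matrix (Fin 3) (Fin 3) ℂ) ∈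
      ZU !![1, 1, 1; 0, 1, 0; 0, 0, 1] := by
    refine ⟨?_, rfl⟩
    simp [IsUnitriangular]
  have hv := h ▸ Set.mem_image_of_mem (fun m => u * m * u⁻¹) hx
  have hdet : IsUnit u.det := by
    rw [Matrix.det_fin_three]
    simp [h00, h11, h22, h10, h20, h21]
  have hvu : (u * !![1, 1, 1; 0, 1, 0; 0, 0, 1] * u⁻¹) * u =
      u * !![1, 1, 1; 0, 1, 0; 0, 0, 1] := by
    rw [Matrix.mul_assoc, Matrix.nonsing_inv_mul u hdet, Matrix.mul_one]
  generalize u * !![1, 1, 1; 0, 1, 0; 0, 0, 1] * u⁻¹ = v at hv hvu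
  obtain ⟨⟨v00, v11, v22, v10, v20, v21⟩, hc⟩ := hv
  have e1 := congrFun (congrFun hc 0) 2
  have e2 := congrFun (congrFun hvu 0) 1
  simp [Matrix.mul_apply, Fin.sum_univ_three, v00, v22] at e1
  simp [Matrix.mul_apply, Fin.sum_univ_three, v00, h00, h11, h21] at e2
  have e3 : v 0 1 = 0 := by linear_combination e1
  have : (1 : ℂ) = 0 := by linear_combination e3 - e2
  exact one_ne_zero this
end
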